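/- If C is a virtually-ℤ subgroup of a one-relator group with torsion, then C is either infinite cyclic or infinite dihedral. -/

import Mathlib

/-- A group is *virtually-ℤ* if it has a finite-index subgroup isomorphic to `ℤ`. -/
def VirtuallyZ (G : Type*) [Group G] : Prop :=
  ∃ H : Subgroup G, H.FiniteIndex ∧ Nonempty (H ≃* Multiplicative ℤ)

/-- A subgroup `M` of `G` is *malnormal* if `g M g⁻¹ ∩ M ≠ 1` implies `g ∈ M`. -/
def Subgroup.IsMalnormal {G : Type*} [Group G] (M : Subgroup G) : Prop :=
  ∀ g : G, (∃ x : G, x ≠ 1 ∧ x ∈ M ∧ g * x * g⁻¹ ∈ M) → g ∈ M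

/-- A group is a *free product of cyclic groups* if it is isomorphic to the free product
(`Monoid.CoprodI`) of a family of cyclic groups; every cyclic group is isomorphic to
`Multiplicative (ZMod m)` for some `m : ℕ` (with `m = 0` giving the infinite cyclic group). -/
def IsFreeProductOfCyclics (G : Type*) [Group G] : Prop :=
  ∃ (ι : Type) (m : ι → ℕ),
    Nonempty (G ≃* Monoid.CoprodI fun i => Multiplicative (ZMod (m i)))

/-- A group is *freely decomposable* if it is isomorphic to a free product of two
nontrivial groups. -/
def FreelyDecomposable (G : Type*) [Group G] : Prop :=
  ∃ (H K : Type) (gH : Group H) (gK : Group K),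
    Nontrivial H ∧ Nontrivial K ∧
      Nonempty (G ≃* (letI := gH; letI := gK; Monoid.Coprod H K))

/-- A group is *freely indecomposable* if it is not isomorphic to a free product of two
nontrivial groups. -/
def FreelyIndecomposable (G : Type*) [Group G] : Prop := ¬ FreelyDecomposable G


/-- Elements commuting with a nontrivial torsion element are torsion. -/
def TorsProp (G : Type*) [Group G] : Prop :=
  ∀ g h : G, IsOfFinOrder g → g ≠ 1 → g * h = h * g → IsOfFinOrder h

theorem isOfFinOrder_iff_of_inj {G H : Type*} [Group G] [Group H] (f : G →* H)
    (hf : Function.Injective f) {x : G} : IsOfFinOrder (f x) ↔ IsOfFinOrder x := by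
  simp only [isOfFinOrder_iff_pow_eq_one, ← map_pow, map_eq_one_iff f hf]

theorem TorsProp.of_injective {G H : Type*} [Group G] [Group H] (f : G →* H)
    (hf : Function.Injective f) (hH : TorsProp H) : TorsProp G := by
  intro g h hg hg1 hc
  have := hH (f g) (f h) (f.isOfFinOrder hg) (by simpa using (map_ne_one_iff f hf).2 hg1)
    (by rw [← map_mul, hc, map_mul])
  exact (isOfFinOrder_iff_of_inj f hf).1 this

section HNN
open HNNExtension

variable {G : Type*} [Group G] {A B : Subgroup G} (φ : A ≃* B)

def hnnE (l : List (ℤˣ × G)) : HNNExtension G A B φ :=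
  (l.map (fun x => t ^ (x.1 : ℤ) * of x.2)).prod

theorem hnnE_append (l m : List (ℤˣ × G)) : hnnE φ (l ++ m) = hnnE φ l * hnnE φ m := by
  simp [hnnE]

def hnnChain (A B : Subgroup G) (l : List (ℤˣ × G)) : Prop :=
  l.IsChain (fun a b => a.2 ∈ toSubgroup A B a.1 → a.1 = b.1)

theorem hnn_exists_word (x : HNNExtension G A B φ) :
    ∃ (g : G) (l : List (ℤˣ × G)), hnnChain A B l ∧ x = of g * hnnE φ l := by
  obtain ⟨d⟩ := NormalWord.TransversalPair.nonempty G A B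
  refine ⟨((NormalWord.equiv φ d) x).head, ((NormalWord.equiv φ d) x).toList,
    ((NormalWord.equiv φ d) x).chain, ?_⟩
  exact ((NormalWord.equiv φ d).left_inv x).symm

theorem hnn_britton (g : G) (l : List (ℤˣ × G)) (hl : hnnChain A B l)
    (h : of g * hnnE φ l ∈ (of.range : Subgroup (HNNExtension G A B φ))) : l = [] :=
  ReducedWord.toList_eq_nil_of_mem_of_range φ ⟨g, l, hl⟩ h

theorem hnnChain_concat_iff (l : List (ℤˣ × G)) (u : ℤˣ) (x y : G)
    (h : hnnChain A B (l ++ [(u, x)])) : hnnChain A B (l ++ [(u, y)]) := by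
  unfold hnnChain at *
  rw [List.isChain_append] at *
  refine ⟨h.1, by simp, ?_⟩
  intro a ha b hb
  simp at hb
  subst hb
  exact h.2.2 a ha (u, x) (by simp)

theorem hnn_conj_t (u : ℤˣ) (z : G) (hz : z ∈ toSubgroup A B u) :
    ∃ z' : G, (t ^ (u : ℤ) * of z * t ^ (-(u : ℤ)) : HNNExtension G A B φ) = of z' := by
  rcases Int.units_eq_one_or u with rfl | rfl
  · refine ⟨φ ⟨z, hz⟩, ?_⟩
    rw [equiv_eq_conj]; simp
  · refine ⟨φ.symm ⟨z, hz⟩, ?_⟩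
    rw [equiv_symm_eq_conj]; simp

theorem hnnChain_pow (l : List (ℤˣ × G)) (h : hnnChain A B (l ++ l)) (n : ℕ) :
    ∃ m, hnnChain A B m ∧ hnnE φ m = hnnE φ l ^ (n + 1) ∧ m.head? = l.head? ∧
      (l ≠ [] → m ≠ []) := by
  have h' := h
  unfold hnnChain at h'
  rw [List.isChain_append] at h'
  induction n with
  | zero => exact ⟨l, h'.1, by simp, rfl, id⟩
  | succ n ih =>
    obtain ⟨m, hm, he, hh, hne⟩ := ih
    refine ⟨l ++ m, ?_, ?_, ?_, ?_⟩
    · unfold hnnChain at *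
      rw [List.isChain_append]
      refine ⟨h'.1, hm, ?_⟩
      rw [hh]; exact h'.2.2
    · rw [hnnE_append, he, ← pow_succ']
    · cases l with
      | nil => simpa using hh
      | cons a l => simp
    · intro hl; simp [hl]

theorem hnn_torsion_conj_aux (n : ℕ) : ∀ (l : List (ℤˣ × G)) (x : G), l.length ≤ n →
    hnnChain A B l → IsOfFinOrder (of x * hnnE φ l) →
    ∃ (c : HNNExtension G A B φ) (y : G), c * (of x * hnnE φ l) * c⁻¹ = of y := by
  induction n using Nat.strong_induction_on with
  | _ n ih =>
  intro l x hn hl hfin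
  rcases List.eq_nil_or_concat l with rfl | ⟨l', ⟨u, y⟩, rfl⟩
  · exact ⟨1, x, by simp [hnnE]⟩
  rw [List.concat_eq_append] at *
  set l2 := l' ++ [(u, y * x)] with hl2
  have hc2 : hnnChain A B l2 := hnnChain_concat_iff _ _ _ _ hl
  have hconj : (of x)⁻¹⁻¹ * hnnE φ l2 * (of x)⁻¹ = of x * hnnE φ (l' ++ [(u, y)]) := by
    rw [hl2, hnnE_append, hnnE_append]
    simp [hnnE, mul_assoc]
  have hfin2 : IsOfFinOrder (hnnE φ l2) := by
    have : SemiconjBy (of x)⁻¹⁻¹ (hnnE φ l2) (of x * hnnE φ (l' ++ [(u, y)])) := by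
      unfold SemiconjBy; rw [← hconj]; simp [mul_assoc]
    obtain ⟨k, hk, hk1⟩ := isOfFinOrder_iff_pow_eq_one.1 hfin
    refine isOfFinOrder_iff_pow_eq_one.2 ⟨k, hk, ?_⟩
    rw [← hconj] at hk1
    simpa [conj_pow] using hk1
  by_cases hcc : hnnChain A B (l2 ++ l2)
  · exfalso
    obtain ⟨k, hk, hk1⟩ := isOfFinOrder_iff_pow_eq_one.1 hfin2
    obtain ⟨m, hm, he, -, hne⟩ := hnnChain_pow φ l2 hcc (k - 1)
    rw [Nat.sub_add_cancel hk, hk1] at he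
    exact hne (by simp [hl2]) (hnn_britton φ 1 m hm ⟨1, by simp [he]⟩)
  · unfold hnnChain at hcc
    rw [List.isChain_append] at hcc
    have : ¬ ∀ b ∈ l2.head?, y * x ∈ toSubgroup A B u → u = b.1 := by
      intro h
      exact hcc ⟨hc2, hc2, fun a ha b hb => by
        simp [hl2] at ha; subst ha; exact h b hb⟩
    push Not at this
    obtain ⟨⟨u1, y1⟩, hb, hmem, hne⟩ := this
    cases l' with
    | nil => simp [hl2] at hb; exact absurd hb.1 hne
    | cons a m =>
      simp [hl2] at hb
      subst hb
      have hu1 : u1 = -u := by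
        rcases Int.units_eq_one_or u with rfl | rfl <;>
        rcases Int.units_eq_one_or u1 with rfl | rfl <;> simp_all
      obtain ⟨z', hz'⟩ := hnn_conj_t φ u _ hmem
      have hmchain : hnnChain A B m := by
        have := hl
        unfold hnnChain at *
        rw [List.cons_append, List.isChain_cons, List.isChain_append] at this
        exact this.2.1
      have hkey : (t ^ (u : ℤ) * of (y * x)) * hnnE φ l2 * (t ^ (u : ℤ) * of (y * x))⁻¹ =
          of (z' * y1) * hnnE φ m := by
        rw [hl2, hnnE_append, map_mul of z', ← hz']
        simp [hnnE, mul_assoc, hu1]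
      have hconj2 : ((t ^ (u : ℤ) * of (y * x)) * (of x)⁻¹) *
          (of x * hnnE φ (((u1, y1) :: m) ++ [(u, y)])) *
          ((t ^ (u : ℤ) * of (y * x)) * (of x)⁻¹)⁻¹ = of (z' * y1) * hnnE φ m := by
        rw [← hkey, ← hconj]; group
      have hfin3 : IsOfFinOrder (of (z' * y1) * hnnE φ m) := by
        obtain ⟨k, hk, hk1⟩ := isOfFinOrder_iff_pow_eq_one.1 hfin2
        refine isOfFinOrder_iff_pow_eq_one.2 ⟨k, hk, ?_⟩
        rw [← hkey, conj_pow, hk1, mul_one, mul_inv_cancel]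
      obtain ⟨c, w, hw⟩ := ih m.length (by simp at hn; omega) m _ le_rfl hmchain hfin3
      refine ⟨c * ((t ^ (u : ℤ) * of (y * x)) * (of x)⁻¹), w, ?_⟩
      rw [← hw, ← hconj2]; group

theorem hnn_torsProp (hG : TorsProp G) (hA : ∀ a ∈ A, IsOfFinOrder a → a = 1)
    (hB : ∀ a ∈ B, IsOfFinOrder a → a = 1) : TorsProp (HNNExtension G A B φ) := by
  have key : ∀ (g : G) (h : HNNExtension G A B φ), IsOfFinOrder g → g ≠ 1 →
      of g * h = h * of g → IsOfFinOrder h := by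
    intro g h hg hg1 hc
    obtain ⟨x, l, hl, rfl⟩ := hnn_exists_word φ h
    rcases List.eq_nil_or_concat l with rfl | ⟨l', ⟨u, y⟩, rfl⟩
    · simp only [hnnE, List.map_nil, List.prod_nil, mul_one] at hc ⊢
      have : g * x = x * g := of_injective (φ := φ) (by simpa using hc)
      exact of.isOfFinOrder (hG g x hg hg1 this)
    · exfalso
      rw [List.concat_eq_append] at *
      let w₁ : NormalWord.ReducedWord G A B := ⟨g * x, _, hl⟩
      let w₂ : NormalWord.ReducedWord G A B := ⟨x, _, hnnChain_concat_iff _ _ _ (y * g) hl⟩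
      have hp : w₁.prod φ = w₂.prod φ := by
        show of (g * x) * hnnE φ _ = of x * hnnE φ _
        rw [map_mul, mul_assoc, hc, hnnE_append, hnnE_append]
        simp [hnnE, mul_assoc]
      have h2 := (ReducedWord.map_fst_eq_and_of_prod_eq φ hp).2
      obtain ⟨a, ha⟩ : ∃ a, a ∈ w₁.toList.head? := by
        refine ⟨w₁.toList.head (by simp [w₁]), List.head?_eq_some_head _⟩
      have h3 := h2 a.1 (by rw [Option.mem_def] at ha; simp [ha])
      have hfin : IsOfFinOrder ((g * x)⁻¹ * x) := by
        have : (g * x)⁻¹ * x = x⁻¹ * g⁻¹ * x⁻¹⁻¹ := by group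
        rw [this]
        obtain ⟨k, hk, hk1⟩ := isOfFinOrder_iff_pow_eq_one.1 hg
        refine isOfFinOrder_iff_pow_eq_one.2 ⟨k, hk, ?_⟩
        rw [conj_pow, inv_pow, hk1]; simp
      have : (g * x)⁻¹ * x = 1 := by
        rcases Int.units_eq_one_or a.1 with h | h
        · rw [h] at h3; exact hB _ h3 hfin
        · rw [h, neg_neg] at h3; exact hA _ h3 hfin
      apply hg1
      have h4 : x = g * x := by rw [inv_mul_eq_one] at this; exact this.symm
      simpa using h4.symm
  intro g h hg hg1 hc
  obtain ⟨x, l, hl, hgl⟩ := hnn_exists_word φ g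
  obtain ⟨c, y, hy⟩ := hnn_torsion_conj_aux φ _ l x le_rfl hl (hgl ▸ hg)
  rw [← hgl] at hy
  have hy1 : IsOfFinOrder y := by
    rw [← isOfFinOrder_iff_of_inj (of : G →* HNNExtension G A B φ) (of_injective φ), ← hy]
    obtain ⟨k, hk, hk1⟩ := isOfFinOrder_iff_pow_eq_one.1 hg
    refine isOfFinOrder_iff_pow_eq_one.2 ⟨k, hk, ?_⟩
    rw [conj_pow, hk1]; simp
  have hfin := key y (c * h * c⁻¹) hy1 (by
      rintro rfl
      apply hg1
      rw [map_one] at hy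
      simpa using hy) (by
      rw [← hy]
      have : c * g * c⁻¹ * (c * h * c⁻¹) = c * (g * h) * c⁻¹ := by group
      rw [this, hc]; group)
  obtain ⟨k, hk, hk1⟩ := isOfFinOrder_iff_pow_eq_one.1 hfin
  refine isOfFinOrder_iff_pow_eq_one.2 ⟨k, hk, ?_⟩
  simpa [conj_pow] using hk1

end HNN


section FreeTools

variable {X Y : Type}

/-- Word-length bound, without reference to reduced words. -/
def LenLe (g : FreeGroup X) (n : ℕ) : Prop :=
  ∃ L : List (X × Bool), FreeGroup.mk L = g ∧ L.length ≤ n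

theorem LenLe.mono {g : FreeGroup X} {n m : ℕ} (h : LenLe g n) (hnm : n ≤ m) : LenLe g m := by
  obtain ⟨L, h1, h2⟩ := h
  exact ⟨L, h1, h2.trans hnm⟩

theorem LenLe.one : LenLe (1 : FreeGroup X) 0 := ⟨[], rfl, le_rfl⟩

theorem LenLe.of (x : X) : LenLe (FreeGroup.of x) 1 := ⟨[(x, true)], rfl, le_rfl⟩

theorem LenLe.mul {g h : FreeGroup X} {n m : ℕ} (hg : LenLe g n) (hh : LenLe h m) :
    LenLe (g * h) (n + m) := by
  obtain ⟨L, rfl, h1⟩ := hg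
  obtain ⟨M, rfl, h2⟩ := hh
  refine ⟨L ++ M, by simp, by simp; omega⟩

theorem LenLe.inv {g : FreeGroup X} {n : ℕ} (hg : LenLe g n) : LenLe g⁻¹ n := by
  obtain ⟨L, rfl, h1⟩ := hg
  exact ⟨FreeGroup.invRev L, by simp, by simpa using h1⟩

theorem mk_cons_eq (x : X) (b : Bool) (L : List (X × Bool)) :
    FreeGroup.mk ((x, b) :: L) = (if b then FreeGroup.of x else (FreeGroup.of x)⁻¹) *
      FreeGroup.mk L := by
  have : FreeGroup.mk ((x, b) :: L) = FreeGroup.mk [(x, b)] * FreeGroup.mk L := by simp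
  rw [this]
  cases b <;> simp [FreeGroup.of, FreeGroup.invRev]

theorem LenLe.lift (f : X → FreeGroup Y) (hf : ∀ x, LenLe (f x) 1) {g : FreeGroup X} {n : ℕ}
    (hg : LenLe g n) : LenLe (FreeGroup.lift f g) n := by
  obtain ⟨L, rfl, h1⟩ := hg
  refine LenLe.mono ?_ h1
  clear h1
  induction L with
  | nil => exact LenLe.one
  | cons p L ih =>
    obtain ⟨x, b⟩ := p
    rw [mk_cons_eq, map_mul, List.length_cons, Nat.add_comm]
    refine LenLe.mul ?_ ih
    cases b
    · simpa using (hf x).inv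
    · simpa using hf x

open Classical in
/-- Retraction killing the letters outside `S`. -/
noncomputable def rho (S : Set X) : FreeGroup X →* FreeGroup X :=
  FreeGroup.lift (fun x => if x ∈ S then FreeGroup.of x else 1)

theorem rho_of_mem {S : Set X} {x : X} (h : x ∈ S) : rho S (FreeGroup.of x) = FreeGroup.of x := by
  simp [rho, h]

theorem rho_of_not_mem {S : Set X} {x : X} (h : x ∉ S) : rho S (FreeGroup.of x) = 1 := by
  simp [rho, h]

theorem LenLe.rho (S : Set X) {g : FreeGroup X} {n : ℕ} (hg : LenLe g n) :
    LenLe (_root_.rho S g) n := by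
  unfold _root_.rho
  refine LenLe.lift _ ?_ hg
  intro x
  split_ifs
  · exact LenLe.of x
  · exact LenLe.one.mono (by simp)

theorem rho_rho (S T : Set X) (w : FreeGroup X) : rho S (rho T w) = rho (S ∩ T) w := by
  have : (rho S).comp (rho T) = rho (S ∩ T) := by
    ext x
    by_cases h1 : x ∈ S <;> by_cases h2 : x ∈ T <;>
      simp [rho, h1, h2]
  exact DFunLike.congr_fun this w

theorem rho_idem (S : Set X) (w : FreeGroup X) : rho S (rho S w) = rho S w := by
  rw [rho_rho, Set.inter_self]

theorem rho_fix_mono {S T : Set X} (hST : S ⊆ T) {w : FreeGroup X} (h : rho S w = w) :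
    rho T w = w := by
  rw [← h, rho_rho, Set.inter_eq_self_of_subset_right hST]

theorem isConj_rho_of {S : Set X} {r u : FreeGroup X} (h : IsConj r u) (hu : rho S u = u) :
    IsConj r (rho S r) := by
  have := (rho S).map_isConj h
  rw [hu] at this
  exact h.trans this.symm

/-- Two homs agreeing on the letters of `S` agree on the fixed points of `rho S`. -/
theorem hom_eq_of_rho {G : Type*} [Group G] {S : Set X} (f g : FreeGroup X →* G)
    (h : ∀ x ∈ S, f (FreeGroup.of x) = g (FreeGroup.of x)) {w : FreeGroup X} (hw : rho S w = w) :
    f w = g w := by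
  have : f.comp (rho S) = g.comp (rho S) := by
    ext x
    by_cases hx : x ∈ S
    · simp [rho_of_mem hx, h x hx]
    · simp [rho_of_not_mem hx]
  rw [← hw]
  exact DFunLike.congr_fun this w

theorem hom_eq_on_list {G : Type*} [Group G] (f g : FreeGroup X →* G) (L : List (X × Bool))
    (h : ∀ p ∈ L, f (FreeGroup.of p.1) = g (FreeGroup.of p.1)) :
    f (FreeGroup.mk L) = g (FreeGroup.mk L) := by
  induction L with
  | nil => rw [← FreeGroup.one_eq_mk, map_one, map_one]
  | cons p L ih =>
    obtain ⟨x, b⟩ := p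
    have h1 := h (x, b) (by simp)
    rw [mk_cons_eq, map_mul, map_mul, ih (fun p hp => h p (by simp [hp]))]
    cases b <;> simp_all

theorem exists_list (g : FreeGroup X) : ∃ L, FreeGroup.mk L = g := Quot.exists_rep g

theorem rho_mk_eq_self {S : Set X} (L : List (X × Bool)) (h : ∀ p ∈ L, p.1 ∈ S) :
    rho S (FreeGroup.mk L) = FreeGroup.mk L :=
  hom_eq_on_list (rho S) (MonoidHom.id _) L (fun p hp => by simp [rho_of_mem (h p hp)])

theorem rho_univ (w : FreeGroup X) : rho Set.univ w = w := by
  obtain ⟨L, rfl⟩ := exists_list w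
  exact rho_mk_eq_self L (by simp)

theorem rho_empty (w : FreeGroup X) : rho ∅ w = 1 := by
  obtain ⟨L, rfl⟩ := exists_list w
  exact hom_eq_on_list (rho ∅) 1 L (fun p hp => by simp [rho_of_not_mem])

theorem exists_ess {S : Set X} {r : FreeGroup X} (h : ¬ IsConj r (rho S r)) :
    ∃ b, b ∉ S ∧ ¬ IsConj r (rho {b}ᶜ r) := by
  classical
  by_contra hcon
  push Not at hcon
  apply h
  obtain ⟨L, hL⟩ := exists_list r
  have key : ∀ T : Finset X, (∀ x ∈ T, x ∉ S) → IsConj r (rho (↑T : Set X)ᶜ r) := by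
    intro T
    induction T using Finset.induction_on with
    | empty =>
      intro _
      rw [Finset.coe_empty, Set.compl_empty, rho_univ]
    | insert b T hb ih =>
      intro hT
      have h1 := ih (fun x hx => hT x (by simp [hx]))
      have h2 := hcon b (hT b (by simp))
      have h3 := (rho (↑T : Set X)ᶜ).map_isConj h2
      rw [rho_rho] at h3
      convert h1.trans h3 using 3
      ext x; simp [not_or, and_comm]
  have h1 := key ((L.map Prod.fst).toFinset.filter (· ∉ S)) (by simp)
  convert h1 using 1
  rw [← hL]
  apply hom_eq_on_list
  intro p hp
  by_cases hpS : p.1 ∈ S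
  · rw [rho_of_mem hpS, rho_of_mem (by simp [hpS])]
  · rw [rho_of_not_mem hpS, rho_of_not_mem]
    obtain ⟨x, b⟩ := p
    simp at hpS
    cases b <;> simp [hpS] <;> tauto

open Classical in
/-- exponent sum of `t` -/
noncomputable def expo (t : X) : FreeGroup X →* Multiplicative ℤ :=
  FreeGroup.lift (fun x => if x = t then Multiplicative.ofAdd 1 else 1)

theorem expo_self (t : X) : expo t (FreeGroup.of t) = Multiplicative.ofAdd 1 := by simp [expo]

theorem expo_ne {t x : X} (h : x ≠ t) : expo t (FreeGroup.of x) = 1 := by simp [expo, h]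

theorem expo_of_isConj {t : X} {r u : FreeGroup X} (h : IsConj r u) : expo t r = expo t u :=
  isConj_iff_eq.1 ((expo t).map_isConj h)

theorem expo_rho {t : X} {w : FreeGroup X} : expo t (rho {t}ᶜ w) = 1 := by
  have : expo t (rho {t}ᶜ w) = (1 : FreeGroup X →* Multiplicative ℤ) (rho {t}ᶜ w) :=
    hom_eq_of_rho (S := {t}ᶜ) _ _ (fun x hx => by simp [expo_ne hx]) (rho_idem _ _)
  simpa using this

theorem mem_ncl_map {G : Type*} [Group G] (f : FreeGroup X →* G) {r w : FreeGroup X}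
    (h : w ∈ Subgroup.normalClosure {r}) : f w ∈ Subgroup.normalClosure {f r} := by
  have : Subgroup.normalClosure {r} ≤ (Subgroup.normalClosure {f r}).comap f := by
    apply Subgroup.normalClosure_le_normal
    simpa using Subgroup.subset_normalClosure (by simp)
  exact this h

theorem ncl_one_mem {G : Type*} [Group G] {w : G}
    (h : w ∈ Subgroup.normalClosure {(1 : G)}) : w = 1 := by
  have : Subgroup.normalClosure {(1 : G)} ≤ ⊥ := by
    apply Subgroup.normalClosure_le_normal
    simp
  simpa using this h

theorem ncl_eq_of_isConj {G : Type*} [Group G] {r s : G} (h : IsConj r s) :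
    Subgroup.normalClosure {r} = Subgroup.normalClosure {s} := by
  have key : ∀ r s : G, IsConj r s → Subgroup.normalClosure {r} ≤ Subgroup.normalClosure {s} := by
    intro r s h
    apply Subgroup.normalClosure_le_normal
    obtain ⟨c, hc⟩ := isConj_iff.1 h.symm
    rw [Set.singleton_subset_iff, ← hc]
    exact Subgroup.normalClosure_normal.conj_mem _ (Subgroup.subset_normalClosure (by simp)) _
  exact le_antisymm (key r s h) (key s r h.symm)

/-- The Freiheitssatz for the relator `r`. -/
def FHS (r : FreeGroup X) : Prop :=
  ∀ (b : X) (w : FreeGroup X), ¬ IsConj r (rho {b}ᶜ r) → rho {b}ᶜ w = w →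
    w ∈ Subgroup.normalClosure {r} → w = 1

theorem FHS.set {r : FreeGroup X} (h : FHS r) (S : Set X) (w : FreeGroup X)
    (hr : ¬ IsConj r (rho S r)) (hw : rho S w = w) (hm : w ∈ Subgroup.normalClosure {r}) :
    w = 1 := by
  obtain ⟨b, hb, hb2⟩ := exists_ess hr
  exact h b w hb2 (rho_fix_mono (by rintro x hx rfl; exact hb hx) hw) hm

theorem mk_eq_one {r w : FreeGroup X} :
    PresentedGroup.mk {r} w = 1 ↔ w ∈ Subgroup.normalClosure {r} :=
  PresentedGroup.mk_eq_one_iff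

end FreeTools


section Rewriting

variable {X : Type}

/-- `x_i ↦ t^i x t^{-i}` -/
noncomputable def iot (t : X) : FreeGroup (X × ℤ) →* FreeGroup X :=
  FreeGroup.lift (fun p => FreeGroup.of t ^ p.2 * FreeGroup.of p.1 * FreeGroup.of t ^ (-p.2))

/-- shift of the indices -/
noncomputable def sig (m : ℤ) : FreeGroup (X × ℤ) →* FreeGroup (X × ℤ) :=
  FreeGroup.lift (fun p => FreeGroup.of (p.1, p.2 + m))

theorem sig_of (m : ℤ) (p : X × ℤ) : sig m (FreeGroup.of p) = FreeGroup.of (p.1, p.2 + m) := by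
  simp [sig]

theorem iot_of (t : X) (p : X × ℤ) : iot t (FreeGroup.of p) =
    FreeGroup.of t ^ p.2 * FreeGroup.of p.1 * FreeGroup.of t ^ (-p.2) := by
  simp [iot]

theorem sig_sig (m n : ℤ) (k : FreeGroup (X × ℤ)) : sig m (sig n k) = sig (n + m) k := by
  have : (sig m).comp (sig n) = sig (X := X) (n + m) := by
    ext p; simp [sig_of, add_assoc]
  exact DFunLike.congr_fun this k

theorem sig_zero (k : FreeGroup (X × ℤ)) : sig 0 k = k := by
  have : sig 0 = MonoidHom.id (FreeGroup (X × ℤ)) := by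
    ext p; simp [sig_of]
  exact DFunLike.congr_fun this k

theorem sig_injective (m : ℤ) : Function.Injective (sig (X := X) m) := by
  intro a b h
  have := congrArg (sig (-m)) h
  simpa [sig_sig, sig_zero] using this

theorem iot_sig (t : X) (m : ℤ) (k : FreeGroup (X × ℤ)) :
    iot t (sig m k) = FreeGroup.of t ^ m * iot t k * (FreeGroup.of t ^ m)⁻¹ := by
  have : (iot t).comp (sig m) =
      (MulAut.conj (FreeGroup.of t ^ m)).toMonoidHom.comp (iot t) := by
    ext p
    simp only [MonoidHom.comp_apply, sig_of, iot_of, MulEquiv.coe_toMonoidHom, MulAut.conj_apply]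
    rw [add_comm, zpow_add, neg_add_rev, zpow_add]
    simp [mul_assoc]
  exact DFunLike.congr_fun this k

theorem rho_sig (S : Set (X × ℤ)) (m : ℤ) (k : FreeGroup (X × ℤ)) :
    rho S (sig m k) = sig m (rho {p | (p.1, p.2 + m) ∈ S} k) := by
  have : (rho S).comp (sig m) = (sig m).comp (rho {p | (p.1, p.2 + m) ∈ S}) := by
    ext p
    by_cases h : (p.1, p.2 + m) ∈ S
    · simp only [MonoidHom.comp_apply, sig_of]
      rw [rho_of_mem h, rho_of_mem (S := {p : X × ℤ | (p.1, p.2 + m) ∈ S}) h, sig_of]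
    · simp only [MonoidHom.comp_apply, sig_of]
      rw [rho_of_not_mem h, rho_of_not_mem (S := {p : X × ℤ | (p.1, p.2 + m) ∈ S}) h, map_one]
  exact DFunLike.congr_fun this k

theorem LenLe.sig (m : ℤ) {k : FreeGroup (X × ℤ)} {n : ℕ} (h : LenLe k n) :
    LenLe (_root_.sig m k) n := LenLe.lift _ (fun p => LenLe.of _) h

/-- letters different from `t` -/
def offT (t : X) : Set (X × ℤ) := {p | p.1 ≠ t}

theorem expo_iot {t : X} {k : FreeGroup (X × ℤ)} (h : rho (offT t) k = k) :
    expo t (iot t k) = 1 := by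
  have := hom_eq_of_rho ((expo t).comp (iot t)) 1 (S := offT t) (fun p hp => by
    simp [iot_of, expo_ne (show p.1 ≠ t from hp)]) h
  simpa using this

def Good (t : X) (n : ℕ) (g : FreeGroup X) : Prop :=
  ∃ (k : FreeGroup (X × ℤ)) (e : ℤ), g = iot t k * FreeGroup.of t ^ e ∧
    rho (offT t) k = k ∧ LenLe k n

theorem Good.one (t : X) : Good t 0 1 := ⟨1, 0, by simp, by simp, LenLe.one⟩

theorem Good.zpow (t : X) (e : ℤ) : Good t 0 (FreeGroup.of t ^ e) :=
  ⟨1, e, by simp, by simp, LenLe.one⟩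

theorem Good.of {t x : X} (h : x ≠ t) : Good t 1 (FreeGroup.of x) :=
  ⟨FreeGroup.of (x, 0), 0, by simp [iot_of], rho_of_mem h, LenLe.of _⟩

theorem Good.mono {t : X} {n m : ℕ} {g : FreeGroup X} (h : Good t n g) (hnm : n ≤ m) :
    Good t m g := by
  obtain ⟨k, e, h1, h2, h3⟩ := h
  exact ⟨k, e, h1, h2, h3.mono hnm⟩

theorem Good.mul {t : X} {n m : ℕ} {g h : FreeGroup X} (hg : Good t n g) (hh : Good t m h) :
    Good t (n + m) (g * h) := by
  obtain ⟨k, e, rfl, h2, h3⟩ := hg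
  obtain ⟨k', e', rfl, h2', h3'⟩ := hh
  refine ⟨k * sig e k', e + e', ?_, ?_, h3.mul (h3'.sig e)⟩
  · rw [map_mul, iot_sig, zpow_add]; group
  · rw [map_mul, h2, rho_sig]
    congr 2

theorem Good.inv {t : X} {n : ℕ} {g : FreeGroup X} (hg : Good t n g) : Good t n g⁻¹ := by
  obtain ⟨k, e, rfl, h2, h3⟩ := hg
  refine ⟨sig (-e) k⁻¹, -e, ?_, ?_, h3.inv.sig _⟩
  · rw [iot_sig, map_inv]; group
  · rw [rho_sig, map_inv]
    congr 2

theorem Good.subst {t : X} (θ : FreeGroup X →* FreeGroup X)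
    (h1 : ∀ x, Good t 1 (θ (FreeGroup.of x))) (h0 : Good t 0 (θ (FreeGroup.of t)))
    (L : List (X × Bool)) : Good t L.length (θ (FreeGroup.mk L)) ∧
      ((∃ b, (t, b) ∈ L) → Good t (L.length - 1) (θ (FreeGroup.mk L))) := by
  induction L with
  | nil => simpa [← FreeGroup.one_eq_mk] using Good.one t
  | cons p L ih =>
    obtain ⟨x, b⟩ := p
    have hx : ∀ n, Good t n (θ (FreeGroup.of x)) →
        Good t n (θ (if b then FreeGroup.of x else (FreeGroup.of x)⁻¹)) := by
      intro n hn
      cases b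
      · simpa using hn.inv
      · simpa using hn
    rw [mk_cons_eq, map_mul, List.length_cons]
    constructor
    · exact ((hx 1 (h1 x)).mul ih.1).mono (by omega)
    · rintro ⟨c, hc⟩
      by_cases hxt : x = t
      · subst hxt
        exact ((hx 0 h0).mul ih.1).mono (by omega)
      · have : ∃ b, (t, b) ∈ L := by
          refine ⟨c, ?_⟩
          simp at hc
          rcases hc with ⟨h, -⟩ | h
          · exact absurd h.symm hxt
          · exact h
        have hpos : 0 < L.length := by
          obtain ⟨b, hb⟩ := this
          exact List.length_pos_of_mem hb
        exact ((hx 1 (h1 x)).mul (ih.2 this)).mono (by omega)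

theorem Good.exists_iot {t : X} {n : ℕ} {g : FreeGroup X} (h : Good t n g) (he : expo t g = 1) :
    ∃ k, g = iot t k ∧ rho (offT t) k = k ∧ LenLe k n := by
  obtain ⟨k, e, rfl, h2, h3⟩ := h
  refine ⟨k, ?_, h2, h3⟩
  rw [map_mul, expo_iot h2, map_zpow, expo_self, one_mul, ← ofAdd_zsmul] at he
  have : e = 0 := by simpa using he
  simp [this]

/-- the window -/
def win (a : X) (m M : ℤ) : Set (X × ℤ) := {p | p.1 = a → m ≤ p.2 ∧ p.2 ≤ M}

theorem exists_window {a : X} {r : FreeGroup (X × ℤ)} (h : ¬ IsConj r (rho (offT a) r)) :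
    ∃ m M : ℤ, m ≤ M ∧ IsConj r (rho (win a m M) r) ∧ ¬ IsConj r (rho (win a (m + 1) M) r) ∧
      ¬ IsConj r (rho (win a m (M - 1)) r) := by
  classical
  have hex : ∃ d : ℕ, ∃ m : ℤ, IsConj r (rho (win a m (m + d - 1)) r) := by
    obtain ⟨L, rfl⟩ := exists_list r
    have hN : ∃ N : ℕ, ∀ p ∈ L, p.1.2.natAbs ≤ N := by
      clear h
      induction L with
      | nil => exact ⟨0, by simp⟩
      | cons p L ih =>
        obtain ⟨N, hN⟩ := ih
        refine ⟨max N p.1.2.natAbs, ?_⟩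
        intro q hq
        simp at hq
        rcases hq with rfl | hq
        · simp
        · exact (hN q hq).trans (le_max_left _ _)
    obtain ⟨N, hN⟩ := hN
    refine ⟨2 * N + 1, -N, ?_⟩
    rw [rho_mk_eq_self]
    intro p hp _
    have := hN p hp
    constructor
    · omega
    · push_cast; omega
  obtain ⟨m, hm⟩ := Nat.find_spec hex
  have hmin := fun k (hk : k < Nat.find hex) => Nat.find_min hex hk
  set d := Nat.find hex
  have hd : d ≠ 0 := by
    intro h0
    apply h
    rw [h0] at hm
    convert hm using 3
    ext p
    simp only [offT, win, Set.mem_ofPred_eq, ne_eq]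
    constructor
    · intro h1 h2; exact absurd h2 h1
    · intro h1 h2
      have := h1 h2
      push_cast at this
      omega
  refine ⟨m, m + d - 1, by omega, hm, ?_, ?_⟩
  · intro hc
    refine hmin (d - 1) (by omega) ⟨m + 1, ?_⟩
    convert hc using 4
    push_cast [Nat.one_le_iff_ne_zero.2 hd]
    ring
  · intro hc
    refine hmin (d - 1) (by omega) ⟨m, ?_⟩
    convert hc using 4
    push_cast [Nat.one_le_iff_ne_zero.2 hd]
    ring

/-- normalised version -/
theorem exists_window_zero {t a : X} {r : FreeGroup (X × ℤ)} {n : ℕ}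
    (h : ¬ IsConj r (rho (offT a) r)) (ht : rho (offT t) r = r) (hlen : LenLe r n) :
    ∃ (r' : FreeGroup (X × ℤ)) (D m : ℤ), 0 ≤ D ∧ LenLe r' n ∧ rho (offT t) r' = r' ∧
      IsConj (sig m r) r' ∧
      rho (win a 0 D) r' = r' ∧ ¬ IsConj r' (rho (win a 1 D) r') ∧
      ¬ IsConj r' (rho (win a 0 (D - 1)) r') := by
  obtain ⟨m, M, hmM, h1, h2, h3⟩ := exists_window h
  have hconj : IsConj (sig (-m) r) (sig (-m) (rho (win a m M) r)) := (sig (-m)).map_isConj h1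
  have hfix : ∀ (S : Set (X × ℤ)), IsConj (sig (-m) (rho (win a m M) r))
      (rho S (sig (-m) (rho (win a m M) r))) →
      IsConj r (rho {p | (p.1, p.2 + -m) ∈ S} r) := by
    intro S hS
    have h4 : IsConj (sig (-m) r) (rho S (sig (-m) r)) :=
      (hconj.trans hS).trans ((rho S).map_isConj hconj.symm)
    rw [rho_sig] at h4
    have h5 := (sig m).map_isConj h4
    simpa [sig_sig, sig_zero] using h5
  refine ⟨sig (-m) (rho (win a m M) r), M - m, -m, by omega, (hlen.rho _).sig _, ?_, hconj,
    ?_, ?_, ?_⟩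
  · rw [rho_sig]
    have : {p : X × ℤ | (p.1, p.2 + -m) ∈ offT t} = offT t := rfl
    rw [this, rho_rho, Set.inter_comm, ← rho_rho, ht]
  · rw [rho_sig]
    congr 1
    have : {p : X × ℤ | (p.1, p.2 + -m) ∈ win a 0 (M - m)} = win a m M := by
      ext p
      simp only [win, Set.mem_ofPred_eq]
      constructor <;> intro h h' <;> have := h h' <;> constructor <;> omega
    rw [this, rho_idem]
  · intro hc
    apply h2
    convert hfix _ hc using 3
    ext p
    simp only [win, Set.mem_ofPred_eq]
    constructor <;> intro h h' <;> have := h h' <;> constructor <;> omega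
  · intro hc
    apply h3
    convert hfix _ hc using 3
    ext p
    simp only [win, Set.mem_ofPred_eq]
    constructor <;> intro h h' <;> have := h h' <;> constructor <;> omega

end Rewriting


section Magnus
open HNNExtension

variable {X : Type}

theorem toGroup_mk {G : Type*} [Group G] {r : FreeGroup X} {f : X → G}
    (h : ∀ s ∈ ({r} : Set (FreeGroup X)), FreeGroup.lift f s = 1) (w : FreeGroup X) :
    PresentedGroup.toGroup h (PresentedGroup.mk {r} w) = FreeGroup.lift f w := rfl

theorem magnus_hnn {t a : X} (hat : a ≠ t) {r : FreeGroup (X × ℤ)} {D : ℤ}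
    (hD : 0 ≤ D) (hwin : rho (win a 0 D) r = r) (hoff : rho (offT t) r = r) (hF : FHS r)
    (hB : ¬ IsConj r (rho (win a 1 D) r)) (hA : ¬ IsConj r (rho (win a 0 (D - 1)) r)) :
    ∃ (A B : Subgroup (PresentedGroup {r})) (φ : A ≃* B)
      (Φ : PresentedGroup {iot t r} →* HNNExtension (PresentedGroup {r}) A B φ),
      Function.Injective Φ ∧ (∀ x ∈ A, IsOfFinOrder x → x = 1) ∧
      (∀ x ∈ B, IsOfFinOrder x → x = 1) ∧
      (∀ k, rho (offT t ∩ win a 0 D) k = k →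
        Φ (PresentedGroup.mk _ (iot t k)) = of (PresentedGroup.mk _ k)) := by
  classical
  let S := win a 0 (D - 1)
  let fA : (rho S).range →* PresentedGroup {r} := (PresentedGroup.mk {r}).comp (rho S).range.subtype
  let fB : (rho S).range →* PresentedGroup {r} :=
    (PresentedGroup.mk {r}).comp ((sig 1).comp (rho S).range.subtype)
  have hSfix : ∀ x : (rho S).range, rho S x.1 = x.1 := by
    rintro ⟨_, x, rfl⟩; exact rho_idem _ _
  have hfA : Function.Injective fA := by
    rw [injective_iff_map_eq_one]
    intro x hx
    have := hF.set S x.1 hA (hSfix x) (mk_eq_one.1 hx)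
    exact Subtype.ext this
  have hfB : Function.Injective fB := by
    rw [injective_iff_map_eq_one]
    intro x hx
    have h1 : rho (win a 1 D) (sig 1 x.1) = sig 1 x.1 := by
      rw [rho_sig]
      congr 1
      convert hSfix x using 3
      ext p
      simp only [S, win, Set.mem_ofPred_eq]
      constructor <;> intro h h' <;> have := h h' <;> constructor <;> omega
    have := hF.set _ (sig 1 x.1) hB h1 (mk_eq_one.1 hx)
    apply Subtype.ext
    apply sig_injective 1
    simpa using this
  have htors : ∀ f : (rho S).range →* PresentedGroup {r}, Function.Injective f →
      ∀ x ∈ f.range, IsOfFinOrder x → x = 1 := by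
    rintro f hf _ ⟨x, rfl⟩ hx
    rw [isOfFinOrder_iff_of_inj f hf] at hx
    obtain ⟨k, hk, hk1⟩ := isOfFinOrder_iff_pow_eq_one.1 hx
    have h1 : x.1 ^ k = 1 := by simpa using congrArg Subtype.val hk1
    have h2 : x.1 = 1 := (pow_eq_one_iff_left hk.ne').1 h1
    have h3 : x = 1 := Subtype.ext h2
    simp [h3]
  let φ : fA.range ≃* fB.range := (MonoidHom.ofInjective hfA).symm.trans (MonoidHom.ofInjective hfB)
  have hφ : ∀ x : (rho S).range, φ ⟨fA x, x, rfl⟩ = ⟨fB x, x, rfl⟩ := by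
    intro x
    have : (⟨fA x, x, rfl⟩ : fA.range) = MonoidHom.ofInjective hfA x := rfl
    rw [this]
    simp only [φ, MulEquiv.trans_apply, MulEquiv.symm_apply_apply]
    rfl
  let E := HNNExtension (PresentedGroup {r}) fA.range fB.range φ
  let o : FreeGroup (X × ℤ) →* E := (of : _ →* E).comp (PresentedGroup.mk {r})
  have hshift : ∀ p ∈ S, o (FreeGroup.of (p.1, p.2 + 1)) =
      HNNExtension.t * o (FreeGroup.of p) * HNNExtension.t⁻¹ := by
    intro p hp
    have h1 : FreeGroup.of p ∈ (rho S).range := ⟨FreeGroup.of p, rho_of_mem hp⟩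
    have := equiv_eq_conj (φ := φ) ⟨fA ⟨_, h1⟩, ⟨_, h1⟩, rfl⟩
    rw [hφ] at this
    have h2 : fB ⟨_, h1⟩ = PresentedGroup.mk {r} (FreeGroup.of (p.1, p.2 + 1)) := by
      simp [fB, sig_of]
    exact (congrArg (of : _ →* E) h2).symm.trans this
  let f : X → E := fun x => if x = t then HNNExtension.t else o (FreeGroup.of (x, 0))
  have hup : ∀ (x : X) (n : ℕ), (∀ j : ℤ, 0 ≤ j → j < n → (x, j) ∈ S) →
      (HNNExtension.t : E) ^ n * o (FreeGroup.of (x, 0)) * (HNNExtension.t ^ n)⁻¹ =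
        o (FreeGroup.of (x, (n : ℤ))) := by
    intro x n
    induction n with
    | zero => intro _; simp
    | succ n ih =>
      intro h
      have h1 := ih (fun j h0 hj => h j h0 (by push_cast; omega))
      have h2 := hshift (x, (n : ℤ)) (h n (by omega) (by push_cast; omega))
      push_cast
      rw [h2, ← h1, pow_succ']
      group
  have hdown : ∀ (x : X) (n : ℕ), x ≠ a →
      ((HNNExtension.t : E) ^ n)⁻¹ * o (FreeGroup.of (x, 0)) * (HNNExtension.t ^ n) =
        o (FreeGroup.of (x, -(n : ℤ))) := by
    intro x n hx
    induction n with
    | zero => simp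
    | succ n ih =>
      have h2 := hshift (x, -(n : ℤ) - 1) (fun h => absurd h hx)
      rw [sub_add_cancel] at h2
      rw [h2] at ih
      have : -((n + 1 : ℕ) : ℤ) = -(n : ℤ) - 1 := by push_cast; ring
      rw [this]
      have h3 : o (FreeGroup.of (x, -(n : ℤ) - 1)) = HNNExtension.t⁻¹ *
        (HNNExtension.t * o (FreeGroup.of (x, -(n : ℤ) - 1)) * HNNExtension.t⁻¹) *
          HNNExtension.t := by group
      rw [h3, ← ih, pow_succ]
      group
  have hkey : ∀ k, rho (offT t ∩ win a 0 D) k = k → FreeGroup.lift f (iot t k) = o k := by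
    intro k hk
    refine hom_eq_of_rho ((FreeGroup.lift f).comp (iot t)) o (fun p hp => ?_) hk
    obtain ⟨x, i⟩ := p
    have hxt : x ≠ t := hp.1
    have hw : x = a → 0 ≤ i ∧ i ≤ D := hp.2
    simp only [MonoidHom.comp_apply, iot_of, map_mul, map_zpow, FreeGroup.lift_apply_of, f, if_true,
      if_neg hxt]
    rcases Int.eq_nat_or_neg i with ⟨n, rfl | rfl⟩
    · rw [zpow_neg, zpow_natCast]
      apply hup
      intro j h0 hj hja
      have := hw hja
      dsimp only
      omega
    · by_cases hxa : x = a
      · have : n = 0 := by have := hw hxa; omega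
        subst this
        simp
      · rw [neg_neg, zpow_neg, zpow_natCast]
        exact hdown x n hxa
  have hrfix : rho (offT t ∩ win a 0 D) r = r := by rw [← rho_rho, hwin, hoff]
  have hrel : ∀ s ∈ ({iot t r} : Set (FreeGroup X)), FreeGroup.lift f s = 1 := by
    intro s hs
    rw [Set.mem_singleton_iff] at hs
    rw [hs, hkey r hrfix]
    simp [o, PresentedGroup.one_of_mem]
  let Φ : PresentedGroup {iot t r} →* E := PresentedGroup.toGroup hrel
  have hrel2 : ∀ s ∈ ({r} : Set (FreeGroup (X × ℤ))),
      FreeGroup.lift (fun p => PresentedGroup.mk {iot t r} (iot t (FreeGroup.of p))) s = 1 := by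
    intro s hs
    rw [Set.mem_singleton_iff] at hs
    have : FreeGroup.lift (fun p => PresentedGroup.mk {iot t r} (iot t (FreeGroup.of p))) =
      (PresentedGroup.mk {iot t r}).comp (iot t) := by ext p; simp
    rw [hs, this, MonoidHom.comp_apply]
    exact PresentedGroup.one_of_mem (by simp)
  let Ψ0 : PresentedGroup {r} →* PresentedGroup {iot t r} := PresentedGroup.toGroup hrel2
  have hΨ0 : ∀ k, Ψ0 (PresentedGroup.mk {r} k) = PresentedGroup.mk {iot t r} (iot t k) := by
    intro k
    have : FreeGroup.lift (fun p => PresentedGroup.mk {iot t r} (iot t (FreeGroup.of p))) =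
      (PresentedGroup.mk {iot t r}).comp (iot t) := by ext p; simp
    exact DFunLike.congr_fun this k
  let Ψ : E →* PresentedGroup {iot t r} :=
    HNNExtension.lift Ψ0 (PresentedGroup.mk _ (FreeGroup.of t)) (by
      rintro ⟨_, x, rfl⟩
      rw [hφ]
      show _ * Ψ0 (PresentedGroup.mk {r} x.1) = Ψ0 (PresentedGroup.mk {r} (sig 1 x.1)) * _
      rw [hΨ0, hΨ0, iot_sig]
      simp)
  have hΨΦ : Ψ.comp Φ = MonoidHom.id _ := by
    apply PresentedGroup.ext
    intro x
    have : Φ (PresentedGroup.of x) = f x := PresentedGroup.toGroup.of hrel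
    rw [MonoidHom.comp_apply, this]
    by_cases hx : x = t
    · subst hx
      simp [f, Ψ]
      rfl
    · simp only [f, if_neg hx, o, MonoidHom.comp_apply, Ψ]
      simp
      rfl
  refine ⟨fA.range, fB.range, φ, Φ, ?_, htors fA hfA, htors fB hfB, ?_⟩
  · intro x y hxy
    have := congrArg Ψ hxy
    simpa [← MonoidHom.comp_apply, hΨΦ] using this
  · intro k hk
    exact hkey k hk

end Magnus


section Root

def rootFam (Γ : Type) : Bool → Type
  | true => Γ
  | false => Multiplicative ℤ

instance (Γ : Type) [Group Γ] : ∀ i, Group (rootFam Γ i)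
  | true => inferInstanceAs (Group Γ)
  | false => inferInstanceAs (Group (Multiplicative ℤ))

def rootMap (Γ : Type) [Group Γ] (a : Γ) (β : ℤ) : ∀ i, Multiplicative ℤ →* rootFam Γ i
  | true => zpowersHom Γ a
  | false => zpowersHom (Multiplicative ℤ) (Multiplicative.ofAdd β)

theorem exists_root {Γ : Type} [Group Γ] (a : Γ) (ha : ∀ n : ℤ, a ^ n = 1 → n = 0) (β : ℤ)
    (hβ : β ≠ 0) : ∃ (Γ' : Type) (_ : Group Γ') (j : Γ →* Γ') (s : Γ'),
      Function.Injective j ∧ s ^ β = j a := by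
  have hinj : ∀ i, Function.Injective (rootMap Γ a β i) := by
    intro i
    rw [injective_iff_map_eq_one]
    intro n hn
    cases i with
    | true =>
      have : a ^ (Multiplicative.toAdd n) = 1 := hn
      exact ha _ this
    | false =>
      have : (Multiplicative.ofAdd β) ^ (Multiplicative.toAdd n) = 1 := hn
      rw [← ofAdd_zsmul] at this
      have h2 : Multiplicative.toAdd n * β = 0 := this
      rcases mul_eq_zero.1 h2 with h | h
      · exact h
      · exact absurd h hβ
  refine ⟨Monoid.PushoutI (rootMap Γ a β), inferInstance,
    (Monoid.PushoutI.of (φ := rootMap Γ a β) true : rootFam Γ true →* _),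
    Monoid.PushoutI.of (φ := rootMap Γ a β) false
      (Multiplicative.ofAdd (1 : ℤ) : Multiplicative ℤ),
    Monoid.PushoutI.of_injective hinj true, ?_⟩
  have h1 := Monoid.PushoutI.of_apply_eq_base (rootMap Γ a β) true (Multiplicative.ofAdd 1)
  have h2 := Monoid.PushoutI.of_apply_eq_base (rootMap Γ a β) false (Multiplicative.ofAdd 1)
  have e1 : rootMap Γ a β true (Multiplicative.ofAdd 1) = a := by
    show a ^ (1 : ℤ) = a
    simp
  have e2 : rootMap Γ a β false (Multiplicative.ofAdd 1) = Multiplicative.ofAdd β := by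
    show Multiplicative.ofAdd β ^ (1 : ℤ) = _
    simp
  rw [e1] at h1
  rw [e2] at h2
  refine Eq.trans ?_ (h2.trans h1.symm)
  have e3 : (Multiplicative.ofAdd (1 : ℤ)) ^ β = Multiplicative.ofAdd β := by
    rw [← ofAdd_zsmul]
    simp
  exact (map_zpow (Monoid.PushoutI.of (φ := rootMap Γ a β) false)
    (show rootFam Γ false from Multiplicative.ofAdd (1 : ℤ)) β).symm.trans
    (congrArg (Monoid.PushoutI.of (φ := rootMap Γ a β) false) e3)

end Root

section Steps

variable {X : Type}

theorem rho_iot {t b : X} (hb : b ≠ t) (k : FreeGroup (X × ℤ)) :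
    rho {b}ᶜ (iot t k) = iot t (rho (offT b) k) := by
  have : (rho {b}ᶜ).comp (iot t) = (iot t).comp (rho (offT b)) := by
    ext p
    simp only [MonoidHom.comp_apply, iot_of, map_mul, map_zpow]
    rw [rho_of_mem (S := {b}ᶜ) (x := t) (by simpa using hb.symm)]
    by_cases hp : p.1 = b
    · rw [rho_of_not_mem (x := p) (S := offT b) (by simp [offT, hp]),
        rho_of_not_mem (by simpa using hp)]
      simp
    · rw [rho_of_mem (x := p) (S := offT b) hp, rho_of_mem (by simpa using hp), iot_of]
  exact DFunLike.congr_fun this k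

theorem isConj_iot_sig (t : X) (m : ℤ) (k : FreeGroup (X × ℤ)) :
    IsConj (iot t k) (iot t (sig m k)) := by
  rw [isConj_iff]
  exact ⟨_, (iot_sig t m k).symm⟩

theorem exists_letter {t : X} {r0 : FreeGroup (X × ℤ)} (hoff : rho (offT t) r0 = r0)
    (h1 : r0 ≠ 1) : ∃ a, a ≠ t ∧ ¬ IsConj r0 (rho (offT a) r0) := by
  have h0 : ¬ IsConj r0 (rho ∅ r0) := by
    rw [rho_empty, isConj_one_left]; exact h1
  obtain ⟨⟨a, j⟩, -, hp⟩ := exists_ess h0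
  refine ⟨a, ?_, ?_⟩
  · rintro rfl
    apply hp
    rw [rho_fix_mono (S := offT a) _ hoff]
    rintro ⟨x, i⟩ hx h
    simp at h
    exact hx h.1
  · intro h
    apply hp
    refine isConj_rho_of h (rho_fix_mono (S := offT a) ?_ (rho_idem _ _))
    rintro ⟨x, i⟩ hx h
    simp at h
    exact hx h.1


theorem fhs_case1 {n : ℕ}
    (IH : ∀ (Y : Type) (s : FreeGroup Y), LenLe s n → FHS s)
    {t b : X} (hbt : b ≠ t) {r : FreeGroup X} {r0 : FreeGroup (X × ℤ)}
    (hr : r = iot t r0) (hoff : rho (offT t) r0 = r0) (hlen : LenLe r0 n)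
    (hess : ¬ IsConj r (rho {b}ᶜ r)) (w : FreeGroup X) (hw : rho {b}ᶜ w = w)
    (hmem : w ∈ Subgroup.normalClosure {r}) : w = 1 := by
  have hess0 : ¬ IsConj r0 (rho (offT b) r0) := by
    intro h
    apply hess
    rw [hr, rho_iot hbt]
    exact (iot t).map_isConj h
  obtain ⟨r', D, m, hD, hlen', hoff', hconj, hwin, hB, hA⟩ := exists_window_zero hess0 hoff hlen
  obtain ⟨A, B, φ, Φ, hinj, -, -, hΦ⟩ := magnus_hnn hbt hD hwin hoff' (IH _ _ hlen') hB hA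
  have hrr : IsConj r (iot t r') := by
    rw [hr]; exact (isConj_iot_sig t m r0).trans ((iot t).map_isConj hconj)
  have hexp : expo t w = 1 := by
    have := mem_ncl_map (expo t) hmem
    rw [hr, expo_iot hoff] at this
    exact ncl_one_mem this
  have hg : ∃ N, Good t N w := by
    obtain ⟨L, rfl⟩ := exists_list w
    refine ⟨L.length, (Good.subst (MonoidHom.id _) (fun x => ?_) ?_ L).1⟩
    · by_cases hx : x = t
      · subst hx; simpa using (Good.zpow x 1).mono (Nat.zero_le 1)
      · exact Good.of hx
    · simpa using Good.zpow t 1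
  obtain ⟨N, hN⟩ := hg
  obtain ⟨k, hk, hkoff, -⟩ := hN.exists_iot hexp
  set k' := rho (offT b) k with hk'
  have hwk : w = iot t k' := by rw [hk', ← rho_iot hbt, ← hk, hw]
  have hk1 : rho (offT t ∩ win b 0 D) k' = k' := by
    refine rho_fix_mono (S := offT t ∩ offT b) ?_ ?_
    · rintro p ⟨h1, h2⟩
      exact ⟨h1, fun h => absurd h h2⟩
    · rw [hk', rho_rho, Set.inter_assoc, Set.inter_self, Set.inter_comm, ← rho_rho, hkoff]
  have h1 : PresentedGroup.mk {iot t r'} w = 1 := by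
    rw [mk_eq_one, ← ncl_eq_of_isConj hrr]; exact hmem
  have h2 := hΦ k' hk1
  rw [← hwk, h1, map_one] at h2
  have h3 : PresentedGroup.mk {r'} k' = 1 := by
    apply HNNExtension.of_injective φ
    rw [← h2, map_one]
  have h4 := (IH _ _ hlen').set (offT b) k' (by
    intro h
    apply hA
    refine isConj_rho_of h (rho_fix_mono (S := offT b) ?_ (rho_idem _ _))
    intro p h1 h2
    exact absurd h2 h1) (by rw [hk', rho_idem]) (mk_eq_one.1 h3)
  rw [hwk, h4, map_one]

theorem fhs_case2 {n : ℕ}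
    (IH : ∀ (Y : Type) (s : FreeGroup Y), LenLe s n → FHS s)
    {t : X} {r : FreeGroup X} {r0 : FreeGroup (X × ℤ)}
    (hr : r = iot t r0) (hoff : rho (offT t) r0 = r0) (hlen : LenLe r0 n)
    (hess : ¬ IsConj r (rho {t}ᶜ r)) (w : FreeGroup X) (hw : rho {t}ᶜ w = w)
    (hmem : w ∈ Subgroup.normalClosure {r}) : w = 1 := by
  obtain ⟨a, hat, hess0⟩ := exists_letter hoff (by
    rintro rfl
    apply hess
    rw [hr]; simp)
  obtain ⟨r', D, m, hD, hlen', hoff', hconj, hwin, hB, hA⟩ := exists_window_zero hess0 hoff hlen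
  obtain ⟨A, B, φ, Φ, hinj, -, -, hΦ⟩ := magnus_hnn hat hD hwin hoff' (IH _ _ hlen') hB hA
  have hrr : IsConj r (iot t r') := by
    rw [hr]; exact (isConj_iot_sig t m r0).trans ((iot t).map_isConj hconj)
  let z : FreeGroup X →* FreeGroup (X × ℤ) := FreeGroup.lift (fun x => FreeGroup.of (x, 0))
  let S0 : Set (X × ℤ) := {p | p.1 ≠ t ∧ p.2 = 0}
  have hwk : iot t (z w) = w := by
    have : (iot t).comp z = MonoidHom.id _ := by
      ext x; simp [z, iot_of]
    exact DFunLike.congr_fun this w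
  have hk0 : rho S0 (z w) = z w := by
    refine hom_eq_of_rho ((rho S0).comp z) z (fun x hx => ?_) hw
    have : (x, (0 : ℤ)) ∈ S0 := ⟨hx, rfl⟩
    simp [z, rho_of_mem this]
  have hk1 : rho (offT t ∩ win a 0 D) (z w) = z w := by
    refine rho_fix_mono (S := S0) ?_ hk0
    rintro p ⟨h1, h2⟩
    exact ⟨h1, fun h => by rw [h2]; exact ⟨le_rfl, hD⟩⟩
  have h1 : PresentedGroup.mk {iot t r'} w = 1 := by
    rw [mk_eq_one, ← ncl_eq_of_isConj hrr]; exact hmem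
  have h2 := hΦ (z w) hk1
  rw [hwk, h1, map_one] at h2
  have h3 : PresentedGroup.mk {r'} (z w) = 1 := by
    apply HNNExtension.of_injective φ
    rw [← h2, map_one]
  have h4 := (IH _ _ hlen').set S0 (z w) (by
    intro h
    apply hess
    refine isConj_rho_of (hrr.trans ((iot t).map_isConj h)) ?_
    refine hom_eq_of_rho ((rho {t}ᶜ).comp (iot t)) (iot t) (S := S0) ?_ (rho_idem _ _)
    rintro ⟨x, i⟩ ⟨h1, h2⟩
    simp only at h1 h2
    subst h2
    simp [iot_of, rho_of_mem (S := {t}ᶜ) h1]) hk0 (mk_eq_one.1 h3)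
  rw [← hwk, h4, map_one]

theorem torsProp_congr {r s : FreeGroup X} (h : IsConj r s) (hs : TorsProp (PresentedGroup {s})) :
    TorsProp (PresentedGroup {r}) :=
  TorsProp.of_injective
    (QuotientGroup.quotientMulEquivOfEq (ncl_eq_of_isConj h) :
      PresentedGroup {r} ≃* PresentedGroup {s}).toMonoidHom
    (MulEquiv.injective _) hs

theorem tors_step {n : ℕ}
    (IH : ∀ (Y : Type) (s : FreeGroup Y), LenLe s n → FHS s)
    {t : X} {r : FreeGroup X} {r0 : FreeGroup (X × ℤ)}
    (hr : r = iot t r0) (hoff : rho (offT t) r0 = r0) (hlen : LenLe r0 n) (hr1 : r ≠ 1)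
    (IT : ∀ (Y : Type) (s : FreeGroup Y), LenLe s n → TorsProp (PresentedGroup {s})) :
    TorsProp (PresentedGroup {r}) := by
  obtain ⟨a, hat, hess0⟩ := exists_letter hoff (by
    rintro rfl
    exact hr1 (by rw [hr, map_one]))
  obtain ⟨r', D, m, hD, hlen', hoff', hconj, hwin, hB, hA⟩ := exists_window_zero hess0 hoff hlen
  obtain ⟨A, B, φ, Φ, hinj, hTA, hTB, -⟩ := magnus_hnn hat hD hwin hoff' (IH _ _ hlen') hB hA
  have hrr : IsConj r (iot t r') := by
    rw [hr]; exact (isConj_iot_sig t m r0).trans ((iot t).map_isConj hconj)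
  exact torsProp_congr hrr (TorsProp.of_injective Φ hinj (hnn_torsProp φ (IT _ _ hlen') hTA hTB))

end Steps


section Theta

variable {X : Type}

open Classical in
/-- The substitution `a ↦ a ^ β`, `b ↦ b a ^ (-α)`. -/
noncomputable def tht (a b : X) (α β : ℤ) : FreeGroup X →* FreeGroup X :=
  FreeGroup.lift fun x => if x = a then FreeGroup.of a ^ β else
    if x = b then FreeGroup.of b * FreeGroup.of a ^ (-α) else FreeGroup.of x

theorem tht_a (a b : X) (α β : ℤ) : tht a b α β (FreeGroup.of a) = FreeGroup.of a ^ β := by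
  simp [tht]

theorem tht_b {a b : X} (hab : a ≠ b) (α β : ℤ) :
    tht a b α β (FreeGroup.of b) = FreeGroup.of b * FreeGroup.of a ^ (-α) := by
  simp [tht, hab.symm]

theorem tht_ne {a b x : X} (hxa : x ≠ a) (hxb : x ≠ b) (α β : ℤ) :
    tht a b α β (FreeGroup.of x) = FreeGroup.of x := by
  simp [tht, hxa, hxb]

theorem expo_a_tht {a b : X} (hab : a ≠ b) (α β : ℤ) (w : FreeGroup X) :
    expo a (tht a b α β w) = expo a w ^ β * expo b w ^ (-α) := by
  have : (expo a).comp (tht a b α β) =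
      ((zpowGroupHom β).comp (expo a)) * ((zpowGroupHom (-α)).comp (expo b)) := by
    ext x
    simp only [MonoidHom.comp_apply, MonoidHom.mul_apply, zpowGroupHom_apply]
    by_cases hxa : x = a
    · subst hxa
      rw [tht_a, map_zpow, expo_ne hab]; simp
    · by_cases hxb : x = b
      · subst hxb
        rw [tht_b hab, map_mul, map_zpow, expo_ne hab.symm, expo_self, expo_self]; simp
      · rw [tht_ne hxa hxb, expo_ne hxa, expo_ne hxb]; simp
  exact DFunLike.congr_fun this w

theorem expo_b_tht {a b : X} (hab : a ≠ b) (α β : ℤ) (w : FreeGroup X) :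
    expo b (tht a b α β w) = expo b w := by
  have : (expo b).comp (tht a b α β) = expo b := by
    ext x
    simp only [MonoidHom.comp_apply]
    by_cases hxa : x = a
    · subst hxa
      rw [tht_a, map_zpow, expo_ne hab]; simp
    · by_cases hxb : x = b
      · subst hxb
        rw [tht_b hab, map_mul, map_zpow, expo_ne hab]; simp
      · rw [tht_ne hxa hxb]
  exact DFunLike.congr_fun this w

theorem rho_tht {a b : X} (hab : a ≠ b) (α β : ℤ) {w : FreeGroup X} (hw : rho {b}ᶜ w = w) :
    rho {b}ᶜ (tht a b α β w) = tht a b α β w := by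
  refine hom_eq_of_rho ((rho {b}ᶜ).comp (tht a b α β)) (tht a b α β) ?_ hw
  intro x hx
  have hxb : x ≠ b := hx
  simp only [MonoidHom.comp_apply]
  by_cases hxa : x = a
  · subst hxa
    rw [tht_a, map_zpow, rho_of_mem hx]
  · rw [tht_ne hxa hxb, rho_of_mem hx]

theorem good_tht {a b : X} (hab : a ≠ b) (α β : ℤ) {L : List (X × Bool)}
    (ha : ∃ c, (a, c) ∈ L) : Good a (L.length - 1) (tht a b α β (FreeGroup.mk L)) := by
  refine (Good.subst (tht a b α β) ?_ ?_ L).2 ha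
  · intro x
    by_cases hxa : x = a
    · subst hxa
      rw [tht_a]; exact (Good.zpow _ _).mono (by omega)
    · by_cases hxb : x = b
      · subst hxb
        rw [tht_b hab]; exact (Good.of hxa).mul (Good.zpow _ _)
      · rw [tht_ne hxa hxb]; exact Good.of hxa
  · rw [tht_a]; exact Good.zpow _ _

theorem good_id {t : X} {L : List (X × Bool)} (ht : ∃ c, (t, c) ∈ L) :
    Good t (L.length - 1) (FreeGroup.mk L) := by
  refine (Good.subst (MonoidHom.id _) ?_ ?_ L).2 ht
  · intro x
    by_cases hx : x = t
    · subst hx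
      simpa using (Good.zpow x 1).mono (Nat.zero_le 1)
    · exact Good.of hx
  · simpa using Good.zpow t 1

open Classical in
theorem exists_tht_retract {a b : X} (hab : a ≠ b) (α β : ℤ) (hβ : β ≠ 0) {Γ : Type} [Group Γ]
    (f : FreeGroup X →* Γ) (hf : ∀ n : ℤ, f (FreeGroup.of a) ^ n = 1 → n = 0) :
    ∃ (Γ' : Type) (_ : Group Γ') (j : Γ →* Γ') (ζ : FreeGroup X →* Γ'),
      Function.Injective j ∧ ∀ w, ζ (tht a b α β w) = j (f w) := by
  obtain ⟨Γ', gi, j, s, hj, hs⟩ := exists_root _ hf β hβ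
  let ζ : FreeGroup X →* Γ' := FreeGroup.lift fun x => if x = a then s else
    if x = b then j (f (FreeGroup.of b)) * s ^ α else j (f (FreeGroup.of x))
  refine ⟨Γ', gi, j, ζ, hj, ?_⟩
  have : ζ.comp (tht a b α β) = j.comp f := by
    ext x
    simp only [MonoidHom.comp_apply]
    by_cases hxa : x = a
    · subst hxa
      rw [tht_a, map_zpow]; simp [ζ, hs]
    · by_cases hxb : x = b
      · subst hxb
        rw [tht_b hab]; simp [ζ, hxa]
      · rw [tht_ne hxa hxb]; simp [ζ, hxa, hxb]
  exact DFunLike.congr_fun this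

theorem of_zpow_eq_one {a : X} (n : ℤ) (h : FreeGroup.of a ^ n = 1) : n = 0 := by
  have := congrArg (expo a) h
  rw [map_zpow, expo_self, (expo a).map_one, ← ofAdd_zsmul] at this
  simpa using this

theorem ess_of_expo {b : X} {r : FreeGroup X} (h : expo b r ≠ 1) : ¬ IsConj r (rho {b}ᶜ r) := by
  intro hc
  exact h ((expo_of_isConj hc).trans expo_rho)

theorem expo_tht_one {a b : X} (hab : a ≠ b) (r : FreeGroup X) :
    expo a (tht a b (Multiplicative.toAdd (expo a r)) (Multiplicative.toAdd (expo b r)) r) = 1 := by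
  rw [expo_a_tht hab]
  apply Multiplicative.toAdd.injective
  simp [mul_comm]

theorem freiheitssatz (n : ℕ) : ∀ (X : Type) (r : FreeGroup X), LenLe r n → FHS r := by
  induction n using Nat.strong_induction_on with
  | _ n IH =>
  rintro X r ⟨L, rfl, hL⟩ b w hess hw hmem
  by_cases hall : ∀ p ∈ L, p.1 = b
  · have h1 : rho {b}ᶜ (FreeGroup.mk L) = 1 :=
      hom_eq_on_list (rho {b}ᶜ) 1 L (fun p hp => by
        rw [rho_of_not_mem (by simpa using hall p hp)]; rfl)
    have h2 := mem_ncl_map (rho {b}ᶜ) hmem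
    rw [h1, hw] at h2
    exact ncl_one_mem h2
  push Not at hall
  obtain ⟨⟨a, c⟩, hac, hab⟩ := hall
  have hab : a ≠ b := hab
  have hpos : 0 < L.length := List.length_pos_of_mem hac
  have IH' : ∀ (Y : Type) (s : FreeGroup Y), LenLe s (L.length - 1) → FHS s :=
    fun Y s hs => IH (L.length - 1) (by omega) Y s hs
  by_cases he : expo b (FreeGroup.mk L) = 1
  · have hb : ∃ c, (b, c) ∈ L := by
      by_contra hne
      push Not at hne
      apply hess
      rw [rho_mk_eq_self]
      rintro ⟨x, d⟩ hp h
      simp at h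
      subst h
      exact hne d hp
    obtain ⟨k, hk, hoff, hlen⟩ := (good_id hb).exists_iot he
    exact fhs_case2 IH' hk hoff hlen hess w hw hmem
  · set r := FreeGroup.mk L with hr
    set α := Multiplicative.toAdd (expo a r) with hα
    set β := Multiplicative.toAdd (expo b r) with hβ
    have hβ0 : β ≠ 0 := fun h => he (Multiplicative.toAdd.injective h)
    obtain ⟨k, hk, hoff, hlen⟩ := (good_tht hab α β ⟨c, hac⟩).exists_iot (expo_tht_one hab r)
    have h1 := fhs_case1 IH' hab.symm hk hoff hlen
      (ess_of_expo (by rw [expo_b_tht hab]; exact he)) (tht a b α β w) (rho_tht hab α β hw)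
      (mem_ncl_map _ hmem)
    obtain ⟨Γ', _, j, ζ, hj, hζ⟩ := exists_tht_retract hab α β hβ0 (MonoidHom.id (FreeGroup X))
      (fun n hn => of_zpow_eq_one n hn)
    have := hζ w
    rw [h1, map_one] at this
    exact (map_eq_one_iff j hj).1 this.symm

end Theta


section Tors

variable {X : Type}

/-- Subgroup of the presented group generated by `b` and the letters in `S`. -/
def genSub (r : FreeGroup X) (b : X) (S : Set X) : Subgroup (PresentedGroup {r}) :=
  Subgroup.closure ((fun y => PresentedGroup.mk {r} (FreeGroup.of y)) '' (insert b S))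

theorem genSub_mono (r : FreeGroup X) (b : X) {S T : Set X} (h : S ⊆ T) :
    genSub r b S ≤ genSub r b T :=
  Subgroup.closure_mono (Set.image_mono (Set.insert_subset_insert h))

theorem mem_genSub {r : FreeGroup X} {b : X} {S : Set X} {y : X} (hy : y ∈ insert b S) :
    PresentedGroup.mk {r} (FreeGroup.of y) ∈ genSub r b S :=
  Subgroup.subset_closure ⟨y, hy, rfl⟩

open Classical in
theorem genSub_step (b : X) (k : ℤ) (S : Set X) (x : X)
    (h : TorsProp (genSub (FreeGroup.of b ^ k) b S)) :
    TorsProp (genSub (FreeGroup.of b ^ k) b (insert x S)) := by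
  by_cases hx : x ∈ insert b S
  · have : insert b (insert x S) = insert b S := by
      rw [Set.insert_comm]; exact Set.insert_eq_of_mem hx
    unfold genSub at h ⊢
    rw [this]; exact h
  set r := FreeGroup.of b ^ k with hr
  set H := genSub r b S with hH
  let φ : (⊥ : Subgroup H) ≃* (⊥ : Subgroup H) := MulEquiv.refl _
  let f : X → HNNExtension H ⊥ ⊥ φ := fun y =>
    if hy : y ∈ insert b S then HNNExtension.of ⟨_, mem_genSub hy⟩ else
      if y = x then HNNExtension.t else 1
  have hf : ∀ s ∈ ({r} : Set (FreeGroup X)), FreeGroup.lift f s = 1 := by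
    intro s hs
    rw [Set.mem_singleton_iff.1 hs]
    have e0 : FreeGroup.lift f r = f b ^ k := by
      show FreeGroup.lift f (FreeGroup.of b ^ k) = _
      rw [map_zpow, FreeGroup.lift_apply_of]
    rw [e0]
    have hb : b ∈ insert b S := Set.mem_insert _ _
    simp only [f, hb, dif_pos]
    rw [← map_zpow]
    have : (⟨_, mem_genSub hb⟩ : H) ^ k = 1 := by
      apply Subtype.ext
      rw [Subgroup.coe_zpow, ← map_zpow, Subgroup.coe_one, mk_eq_one]
      exact Subgroup.subset_normalClosure (by simp [hr])
    rw [this, map_one]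
  let F : PresentedGroup {r} →* HNNExtension H ⊥ ⊥ φ := PresentedGroup.toGroup hf
  let B : HNNExtension H ⊥ ⊥ φ →* PresentedGroup {r} :=
    HNNExtension.lift H.subtype (PresentedGroup.mk {r} (FreeGroup.of x)) (by
      rintro ⟨a, ha⟩
      rw [Subgroup.mem_bot] at ha
      subst ha
      simp [φ])
  have hBF : Set.EqOn (B.comp F) (MonoidHom.id _) (genSub r b (insert x S)) := by
    apply MonoidHom.eqOn_closure
    rintro _ ⟨y, hy, rfl⟩
    simp only [MonoidHom.comp_apply, MonoidHom.id_apply, F]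
    rw [toGroup_mk, FreeGroup.lift_apply_of]
    by_cases hy2 : y ∈ insert b S
    · simp only [f, hy2, dif_pos, B, HNNExtension.lift_of]
      rfl
    · have : y = x := by
        rw [Set.insert_comm] at hy
        rcases hy with hy | hy
        · exact hy
        · exact absurd hy hy2
      subst this
      simp only [f, hy2, dif_neg, not_false_eq_true, if_true, B, HNNExtension.lift_t]
  refine TorsProp.of_injective (F.comp (genSub r b (insert x S)).subtype) ?_
    (hnn_torsProp φ h ?_ ?_)
  · intro u v huv
    have h1 := hBF u.2
    have h2 := hBF v.2
    apply Subtype.ext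
    simp only [MonoidHom.comp_apply, MonoidHom.id_apply, Subgroup.subtype_apply] at h1 h2 huv
    rw [← h1, ← h2, huv]
  · intro a ha _
    exact Subgroup.mem_bot.1 ha
  · intro a ha _
    exact Subgroup.mem_bot.1 ha

theorem mk_mem_genSub (r : FreeGroup X) (b : X) (L : List (X × Bool)) :
    PresentedGroup.mk {r} (FreeGroup.mk L) ∈ genSub r b {x | x ∈ L.map Prod.fst} := by
  induction L with
  | nil => rw [← FreeGroup.one_eq_mk, map_one]; exact one_mem _
  | cons p L ih =>
    obtain ⟨x, c⟩ := p
    rw [mk_cons_eq, map_mul]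
    refine mul_mem ?_ (genSub_mono r b (by intro y hy; simp at hy ⊢; exact Or.inr hy) ih)
    have : PresentedGroup.mk {r} (FreeGroup.of x) ∈
        genSub r b {y | y ∈ ((x, c) :: L).map Prod.fst} := mem_genSub (by simp)
    cases c
    · simpa using this
    · simpa using this

theorem torsProp_power (b : X) (k : ℤ) (hk : k ≠ 0) :
    TorsProp (PresentedGroup {FreeGroup.of b ^ k}) := by
  have key : ∀ l : List X, TorsProp (genSub (FreeGroup.of b ^ k) b {x | x ∈ l}) := by
    intro l
    induction l with
    | nil =>
      rintro g ⟨h, hh⟩ - - -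
      have : h ∈ Subgroup.zpowers (PresentedGroup.mk {FreeGroup.of b ^ k} (FreeGroup.of b)) := by
        rw [Subgroup.zpowers_eq_closure]
        simpa [genSub] using hh
      obtain ⟨m, rfl⟩ := this
      refine (isOfFinOrder_iff_of_inj (Subgroup.subtype _) (Subgroup.subtype_injective _)).1 ?_
      refine IsOfFinOrder.zpow ?_
      rw [isOfFinOrder_iff_zpow_eq_one]
      refine ⟨k, hk, ?_⟩
      rw [← map_zpow, mk_eq_one]
      exact Subgroup.subset_normalClosure (by simp)
    | cons x l ih =>
      have : {y | y ∈ x :: l} = insert x {y | y ∈ l} := by ext; simp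
      rw [this]
      exact genSub_step b k _ x ih
  intro g h hg hg1 hc
  obtain ⟨g, rfl⟩ := PresentedGroup.mk_surjective _ g
  obtain ⟨h, rfl⟩ := PresentedGroup.mk_surjective _ h
  obtain ⟨Lg, rfl⟩ := exists_list g
  obtain ⟨Lh, rfl⟩ := exists_list h
  have h1 := genSub_mono (FreeGroup.of b ^ k) b
    (T := {x | x ∈ Lg.map Prod.fst ++ Lh.map Prod.fst})
    (by intro y hy; simp at hy ⊢; exact Or.inl hy) (mk_mem_genSub (FreeGroup.of b ^ k) b Lg)
  have h2 := genSub_mono (FreeGroup.of b ^ k) b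
    (T := {x | x ∈ Lg.map Prod.fst ++ Lh.map Prod.fst})
    (by intro y hy; simp at hy ⊢; exact Or.inr hy) (mk_mem_genSub (FreeGroup.of b ^ k) b Lh)
  have := key _ ⟨_, h1⟩ ⟨_, h2⟩ ((isOfFinOrder_iff_of_inj (Subgroup.subtype _) (Subgroup.subtype_injective _)).1 hg)
    (fun h => hg1 (congrArg Subtype.val h)) (Subtype.ext hc)
  exact (isOfFinOrder_iff_of_inj (Subgroup.subtype _) (Subgroup.subtype_injective _)).2 this

theorem torsProp_free : TorsProp (PresentedGroup {(1 : FreeGroup X)}) := by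
  intro g h hg hg1 _
  exfalso
  obtain ⟨g, rfl⟩ := PresentedGroup.mk_surjective _ g
  obtain ⟨n, hn, h1⟩ := isOfFinOrder_iff_pow_eq_one.1 hg
  rw [← map_pow, mk_eq_one] at h1
  have h2 := ncl_one_mem h1
  have : g = 1 := (pow_eq_one_iff_left hn.ne').1 h2
  exact hg1 (by rw [this, map_one])

theorem torsProp_oneRel (n : ℕ) :
    ∀ (X : Type) (r : FreeGroup X), LenLe r n → TorsProp (PresentedGroup {r}) := by
  induction n using Nat.strong_induction_on with
  | _ n IH =>
  rintro X r ⟨L, hr, hL⟩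
  by_cases hr1 : r = 1
  · subst hr1
    exact torsProp_free
  cases hLL : L with
  | nil =>
    exact absurd (by rw [← hr, hLL]; rfl) hr1
  | cons p L' =>
  have hpos : 0 < L.length := by rw [hLL]; simp
  have IT : ∀ (Y : Type) (s : FreeGroup Y), LenLe s (L.length - 1) →
      TorsProp (PresentedGroup {s}) := fun Y s hs => IH (L.length - 1) (by omega) Y s hs
  have IF := freiheitssatz (L.length - 1)
  by_cases hz : ∃ p ∈ L, expo p.1 r = 1
  · obtain ⟨⟨t, c⟩, hp, he⟩ := hz
    have hg := good_id ⟨c, hp⟩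
    rw [hr] at hg
    obtain ⟨k, hk, hoff, hlen⟩ := hg.exists_iot he
    exact tors_step IF hk hoff hlen hr1 IT
  push Not at hz
  obtain ⟨b, c0⟩ := p
  have hbL : (b, c0) ∈ L := by rw [hLL]; simp
  have heb : expo b r ≠ 1 := hz _ hbL
  have hβ0 : Multiplicative.toAdd (expo b r) ≠ 0 := fun h => heb (Multiplicative.toAdd.injective h)
  by_cases hall : ∀ p ∈ L, p.1 = b
  · have h1 : FreeGroup.mk L = FreeGroup.of b ^ (Multiplicative.toAdd (expo b r)) := by
      have := hom_eq_on_list (MonoidHom.id _) ((zpowersHom _ (FreeGroup.of b)).comp (expo b)) L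
        (fun p hp => by
          rw [hall p hp]
          simp [expo_self, zpowersHom_apply])
      rw [← hr]
      simpa [zpowersHom_apply] using this
    rw [hr] at h1
    have := torsProp_power b _ hβ0
    rw [← h1] at this
    exact this
  push Not at hall
  obtain ⟨⟨a, c⟩, hac, hab⟩ := hall
  have hab : a ≠ b := hab
  set α := Multiplicative.toAdd (expo a r) with hα
  set β := Multiplicative.toAdd (expo b r) with hβ
  have hg := good_tht hab α β ⟨c, hac⟩
  rw [hr] at hg
  obtain ⟨k, hk, hoff, hlen⟩ := hg.exists_iot (expo_tht_one hab r)
  have hne : tht a b α β r ≠ 1 := by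
    intro h
    apply heb
    rw [← expo_b_tht hab α β, h, map_one]
  have hT : TorsProp (PresentedGroup {tht a b α β r}) := tors_step IF hk hoff hlen hne IT
  obtain ⟨Γ', _, j, ζ, hj, hζ⟩ := exists_tht_retract hab α β hβ0 (PresentedGroup.mk {r})
    (fun m hm => by
      rw [← map_zpow, mk_eq_one] at hm
      exact of_zpow_eq_one m (freiheitssatz n X r ⟨L, hr, hL⟩ b _ (ess_of_expo heb)
        (by rw [map_zpow, rho_of_mem (by simpa using hab)]) hm))
  have hmk : ∀ w ∈ Subgroup.normalClosure {r},
      PresentedGroup.mk {tht a b α β r} (tht a b α β w) = 1 := by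
    intro w hw
    rw [mk_eq_one]
    exact mem_ncl_map _ hw
  let Θ : PresentedGroup {r} →* PresentedGroup {tht a b α β r} :=
    QuotientGroup.lift _ ((PresentedGroup.mk {tht a b α β r}).comp (tht a b α β)) hmk
  refine TorsProp.of_injective Θ ?_ hT
  rw [injective_iff_map_eq_one]
  intro g hg
  obtain ⟨w, rfl⟩ := PresentedGroup.mk_surjective _ g
  have h1 : PresentedGroup.mk {tht a b α β r} (tht a b α β w) = 1 := hg
  rw [mk_eq_one] at h1
  have h2 := mem_ncl_map ζ h1
  rw [hζ r, hζ w] at h2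
  have h3 : PresentedGroup.mk {r} r = 1 := mk_eq_one.2 (Subgroup.subset_normalClosure rfl)
  rw [h3, map_one] at h2
  exact (map_eq_one_iff j hj).1 (ncl_one_mem h2)

end Tors

section Final

theorem virtZ_final {C : Type*} [Group C] (hT : TorsProp C) (hC : VirtuallyZ C) :
    Nonempty (C ≃* Multiplicative ℤ) ∨ Nonempty (C ≃* DihedralGroup 0) := by
  obtain ⟨H, hfi, ⟨e⟩⟩ := hC
  have hcycH : IsCyclic H := isCyclic_of_injective e.toMonoidHom e.injective
  have hle : H.normalCore ≤ H := H.normalCore_le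
  have hcycN : IsCyclic H.normalCore :=
    isCyclic_of_injective (Subgroup.inclusion hle) (Subgroup.inclusion_injective hle)
  have hNidx : H.normalCore.index ≠ 0 := Subgroup.FiniteIndex.index_ne_zero
  have hNn : H.normalCore.Normal := inferInstance
  obtain ⟨⟨z, hzN⟩, hz⟩ := hcycN.exists_generator
  have hzgen : ∀ x ∈ H.normalCore, ∃ i : ℤ, z ^ i = x := by
    intro x hx
    obtain ⟨i, hi⟩ := hz ⟨x, hx⟩
    exact ⟨i, congrArg Subtype.val hi⟩
  -- `z` has infinite order
  have hzinf : ¬ IsOfFinOrder z := by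
    intro hfin
    set h0 : H := e.symm (Multiplicative.ofAdd 1) with hh0
    obtain ⟨m, hm, -, hmem⟩ := Subgroup.exists_pow_mem_of_index_ne_zero hNidx (h0 : C)
    obtain ⟨i, hi⟩ := hzgen _ hmem
    have h1 : IsOfFinOrder ((h0 : C) ^ m) := by rw [← hi]; exact hfin.zpow
    have h2 : IsOfFinOrder (h0 : C) := (isOfFinOrder_pow.1 h1).resolve_right hm.ne'
    have h3 : IsOfFinOrder h0 :=
      (isOfFinOrder_iff_of_inj H.subtype (Subgroup.subtype_injective _)).1 h2
    have h4 : IsOfFinOrder (e h0) := e.toMonoidHom.isOfFinOrder h3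
    rw [hh0, e.apply_symm_apply] at h4
    obtain ⟨k, hk, h5⟩ := isOfFinOrder_iff_pow_eq_one.1 h4
    rw [← ofAdd_nsmul] at h5
    have h6 : k • (1 : ℤ) = 0 := h5
    simp at h6
    omega
  have hzinj : ∀ i : ℤ, z ^ i = 1 → i = 0 := by
    intro i hi
    by_contra h
    exact hzinf (isOfFinOrder_iff_zpow_eq_one.2 ⟨i, h, hi⟩)
  set D : Subgroup C := Subgroup.centralizer {z} with hD
  have hmemD : ∀ x, x ∈ D ↔ x * z = z * x := by
    intro x
    rw [hD, Subgroup.mem_centralizer_singleton_iff]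
  have hND : H.normalCore ≤ D := by
    intro x hx
    obtain ⟨i, rfl⟩ := hzgen x hx
    rw [hmemD]
    exact ((Commute.refl z).zpow_left i)
  -- `D` is torsion-free
  have hDtf : ∀ x ∈ D, IsOfFinOrder x → x = 1 := by
    intro x hx hfin
    by_contra h
    exact hzinf (hT x z hfin h ((hmemD x).1 hx))
  have hDpow : ∀ (x : D) (m : ℕ), m ≠ 0 → x ^ m = 1 → x = 1 := by
    intro x m hm h
    apply Subtype.ext
    apply hDtf _ x.2
    exact isOfFinOrder_iff_pow_eq_one.2 ⟨m, Nat.pos_of_ne_zero hm, congrArg Subtype.val h⟩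
  have hcen : H.normalCore.subgroupOf D ≤ Subgroup.center D := by
    intro x hx
    rw [Subgroup.mem_center_iff]
    intro g
    obtain ⟨i, hi⟩ := hzgen _ (Subgroup.mem_subgroupOf.1 hx)
    apply Subtype.ext
    rw [Subgroup.coe_mul, Subgroup.coe_mul, ← hi]
    have : Commute (g : C) z := (hmemD g).1 g.2
    exact this.zpow_right i
  have hfin : (Subgroup.center D).FiniteIndex := Subgroup.finiteIndex_of_le hcen
  have hinj1 : Function.Injective (MonoidHom.transferCenterPow D) := by
    rw [injective_iff_map_eq_one]
    intro x hx
    have h := congrArg Subtype.val hx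
    rw [MonoidHom.transferCenterPow_apply] at h
    exact hDpow x _ hfin.index_ne_zero h
  have hcomm : ∀ x y : D, x * y = y * x := by
    intro x y
    apply hinj1
    rw [map_mul, map_mul]
    exact Subtype.ext (Subgroup.mem_center_iff.1 (MonoidHom.transferCenterPow D y).2 _)
  let P : D →* H.normalCore :=
    { toFun := fun x => ⟨(x : C) ^ H.normalCore.index, Subgroup.pow_index_mem _ _⟩
      map_one' := by apply Subtype.ext; simp
      map_mul' := by
        intro x y
        apply Subtype.ext
        have : Commute (x : C) (y : C) := congrArg Subtype.val (hcomm x y)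
        simp [this.mul_pow] }
  have hPinj : Function.Injective P := by
    rw [injective_iff_map_eq_one]
    intro x hx
    have h1 : (x : C) ^ H.normalCore.index = 1 := congrArg Subtype.val hx
    exact hDpow x _ hNidx (Subtype.ext h1)
  have hcycD : IsCyclic D := isCyclic_of_injective P hPinj
  obtain ⟨⟨d, hdD⟩, hd⟩ := hcycD.exists_generator
  have hdgen : ∀ x ∈ D, ∃ i : ℤ, d ^ i = x := by
    intro x hx
    obtain ⟨i, hi⟩ := hd ⟨x, hx⟩
    exact ⟨i, congrArg Subtype.val hi⟩
  obtain ⟨q, hq⟩ := hdgen z (hND hzN)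
  have hq0 : q ≠ 0 := by
    rintro rfl
    exact hzinf (by rw [← hq]; simp)
  have hdinj : ∀ i : ℤ, d ^ i = 1 → i = 0 := by
    intro i hi
    apply hzinj
    rw [← hq, ← zpow_mul, mul_comm, zpow_mul, hi, one_zpow]
  have hdeq : ∀ i j : ℤ, d ^ i = d ^ j → i = j := by
    intro i j h
    have := hdinj (i - j) (by rw [zpow_sub, h, mul_inv_cancel])
    omega
  by_cases htop : ∀ x, x ∈ D
  · left
    refine ⟨(MulEquiv.ofBijective (zpowersHom C d) ⟨?_, ?_⟩).symm⟩
    · rw [injective_iff_map_eq_one]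
      intro i hi
      exact hdinj _ hi
    · intro x
      obtain ⟨i, hi⟩ := hdgen x (htop x)
      exact ⟨Multiplicative.ofAdd i, hi⟩
  right
  push Not at htop
  obtain ⟨t, ht⟩ := htop
  have hconj : ∀ x : C, x ∉ D → x * z * x⁻¹ = z⁻¹ := by
    intro x hx
    obtain ⟨i, hi⟩ := hzgen _ (hNn.conj_mem z hzN x)
    obtain ⟨j, hj⟩ := hzgen _ (hNn.conj_mem z hzN x⁻¹)
    have h1 : z ^ (i * j) = z := by
      rw [zpow_mul, hi, conj_zpow, hj]; group
    have h2 : i * j = 1 := by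
      have := hzinj (i * j - 1) (by rw [zpow_sub, h1]; simp)
      omega
    rcases Int.eq_one_or_neg_one_of_mul_eq_one h2 with h | h
    · exfalso
      apply hx
      rw [hmemD]
      rw [h, zpow_one] at hi
      calc x * z = (x * z * x⁻¹) * x := by group
        _ = z * x := by rw [← hi]
    · rw [← hi, h]; simp
  have hmul : ∀ x y : C, x ∉ D → y ∉ D → x * y ∈ D := by
    intro x y hx hy
    rw [hmemD]
    have h1 : x * z⁻¹ * x⁻¹ = z := by
      rw [← conj_inv, hconj x hx, inv_inv]
    calc x * y * z = x * (y * z * y⁻¹) * x⁻¹ * (x * y) := by group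
      _ = z * (x * y) := by rw [hconj y hy, h1]
  have htd : t * d * t⁻¹ = d⁻¹ := by
    have hzt : t⁻¹ * z * t = z⁻¹ := by
      have := hconj t⁻¹ (fun h => ht (by simpa using D.inv_mem h))
      simpa using this
    have hmem : t * d * t⁻¹ ∈ D := by
      rw [hmemD]
      have hdz : Commute d z := (hmemD d).1 hdD
      have hdz2 : d * z⁻¹ = z⁻¹ * d := hdz.inv_right
      calc t * d * t⁻¹ * z = t * (d * (t⁻¹ * z * t)) * t⁻¹ := by group
        _ = t * ((t⁻¹ * z * t) * d) * t⁻¹ := by rw [hzt, hdz2]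
        _ = z * (t * d * t⁻¹) := by group
    obtain ⟨j, hj⟩ := hdgen _ hmem
    have h1 : d ^ (j * q) = d ^ (-q) := by
      rw [zpow_mul, hj, conj_zpow, hq, hconj t ht, zpow_neg, hq]
    have h2 := hdeq _ _ h1
    have h3 : (j + 1) * q = 0 := by linarith
    have h4 : j = -1 := by
      rcases mul_eq_zero.1 h3 with h | h
      · omega
      · exact absurd h hq0
    rw [← hj, h4]; simp
  have htdi : ∀ i : ℤ, d ^ i * t = t * d ^ (-i) := by
    intro i
    have : t * d ^ (-i) * t⁻¹ = d ^ i := by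
      rw [← conj_zpow, htd]; simp
    rw [← this]; group
  have htt : t * t = 1 := by
    obtain ⟨m, hm⟩ := hdgen _ (hmul t t ht ht)
    have h1 := htdi m
    have h2 : d ^ m * t = t * d ^ m := by rw [hm, mul_assoc]
    have h3 := hdeq _ _ (mul_left_cancel (h1.symm.trans h2))
    have : m = 0 := by omega
    rw [← hm, this, zpow_zero]
  let F : DihedralGroup 0 → C := fun g => match g with
    | DihedralGroup.r i => d ^ (show ℤ from i)
    | DihedralGroup.sr i => t * d ^ (show ℤ from i)
  have hFmul : ∀ g h, F (g * h) = F g * F h := by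
    rintro (i | i) (j | j)
    · rw [DihedralGroup.r_mul_r]
      exact zpow_add d (show ℤ from i) (show ℤ from j)
    · rw [DihedralGroup.r_mul_sr]
      show t * d ^ ((show ℤ from j) - (show ℤ from i)) =
        d ^ (show ℤ from i) * (t * d ^ (show ℤ from j))
      rw [← mul_assoc, htdi, mul_assoc, ← zpow_add]
      congr 2
      ring
    · rw [DihedralGroup.sr_mul_r]
      show t * d ^ ((show ℤ from i) + (show ℤ from j)) =
        t * d ^ (show ℤ from i) * d ^ (show ℤ from j)
      rw [mul_assoc, ← zpow_add]
    · rw [DihedralGroup.sr_mul_sr]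
      show d ^ ((show ℤ from j) - (show ℤ from i)) =
        t * d ^ (show ℤ from i) * (t * d ^ (show ℤ from j))
      rw [mul_assoc, ← mul_assoc _ t, htdi, mul_assoc, ← mul_assoc, htt, one_mul, ← zpow_add]
      congr 1
      ring
  let Φ : DihedralGroup 0 →* C := MonoidHom.mk' F hFmul
  refine ⟨(MulEquiv.ofBijective Φ ⟨?_, ?_⟩).symm⟩
  · rw [injective_iff_map_eq_one]
    rintro (i | i) hi
    · have h1 : d ^ (show ℤ from i) = 1 := hi
      have h2 : i = 0 := hdinj _ h1
      rw [h2]; rfl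
    · exfalso
      have h1 : t * d ^ (show ℤ from i) = 1 := hi
      apply ht
      rw [eq_inv_of_mul_eq_one_left h1]
      exact D.inv_mem (D.zpow_mem hdD _)
  · intro x
    by_cases hx : x ∈ D
    · obtain ⟨i, hi⟩ := hdgen x hx
      exact ⟨DihedralGroup.r i, hi⟩
    · obtain ⟨i, hi⟩ := hdgen _ (hmul t x ht hx)
      refine ⟨DihedralGroup.sr i, ?_⟩
      show t * d ^ i = x
      rw [hi, ← mul_assoc, htt, one_mul]

end Final

/-- Karrass–Solitar, Cebotar.  A virtually-ℤ subgroup of a one-relator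
group with torsion is infinite cyclic or infinite dihedral. -/
theorem statement_2 {X : Type} [Nontrivial X] (R : FreeGroup X) (n : ℕ)
    (hn : 1 < n) (hR : ∀ (S : FreeGroup X) (k : ℕ), 1 ≤ k → R = S ^ k → k = 1)
    (C : Subgroup (PresentedGroup {R ^ n})) (hC : VirtuallyZ C) :
    Nonempty (C ≃* Multiplicative ℤ) ∨ Nonempty (C ≃* DihedralGroup 0) := by
  obtain ⟨L, hL⟩ := exists_list (R ^ n)
  have hT : TorsProp (PresentedGroup {R ^ n}) := torsProp_oneRel L.length X _ ⟨L, hL, le_rfl⟩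
  exact virtZ_final (TorsProp.of_injective C.subtype (Subgroup.subtype_injective C) hT) hC
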